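/- Let m ≥ 0 and d ≥ 1 be integers and let L = L_{2d}^{(m)} = 2U ⊕ mE8(−1) ⊕ ⟨−2d⟩. Let r ∈ L be a primitive vector with (r,r) = −2d and div(r) = 2d. Then the orthogonal complement K_r = {x ∈ L : (x,r) = 0}, with the restricted form, is isometric to the even unimodular lattice II_{2,8m+2} = 2U ⊕ mE8(−1). -/

import Mathlib

/-- The hyperbolic plane `U`, with Gram matrix `[[0,1],[1,0]]`. -/
def gramU : Matrix (Fin 2) (Fin 2) ℤ := !![0, 1; 1, 0]

/-- The Gram matrix of `E₈(−1)`: the negated Cartan (= Gram) matrix of the `E₈` root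
lattice. -/
def gramE8neg : Matrix (Fin 8) (Fin 8) ℤ := -CartanMatrix.E₈

/-- The Gram matrix of `m` orthogonal copies of `E₈(−1)`. -/
def gramE8copies (m : ℕ) : Matrix (Fin m × Fin 8) (Fin m × Fin 8) ℤ :=
  Matrix.of fun p q => if p.1 = q.1 then gramE8neg p.2 q.2 else 0

/-- Index set for `II_{2,8m+2} = 2U ⊕ mE₈(−1)`. -/
abbrev IdxII (m : ℕ) : Type := (Fin 2 ⊕ Fin 2) ⊕ Fin m × Fin 8

/-- The Gram matrix of the even unimodular lattice `II_{2,8m+2} = 2U ⊕ mE₈(−1)`. -/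
def gramII (m : ℕ) : Matrix (IdxII m) (IdxII m) ℤ :=
  Matrix.fromBlocks (Matrix.fromBlocks gramU 0 0 gramU) 0 0 (gramE8copies m)

/-- Index set for `L_{2d}^{(m)} = 2U ⊕ mE₈(−1) ⊕ ⟨−2d⟩`. -/
abbrev IdxL (m : ℕ) : Type := IdxII m ⊕ Fin 1

/-- The Gram matrix of `L_{2d}^{(m)} = 2U ⊕ mE₈(−1) ⊕ ⟨−2d⟩`. -/
def gramL (m d : ℕ) : Matrix (IdxL m) (IdxL m) ℤ :=
  Matrix.fromBlocks (gramII m) 0 0 !![-(2 * (d : ℤ))]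

/-- The bilinear form on `ι → ℤ` associated to a Gram matrix `G`:
`⟨x, y⟩ = ∑ i j, x i * G i j * y j`. -/
def bilin {ι : Type} [Fintype ι] (G : Matrix ι ι ℤ) (x y : ι → ℤ) : ℤ :=
  ∑ i, ∑ j, x i * G i j * y j

/-- `r` is primitive: `ℚr ∩ L = ℤr`, equivalently `r` is not a nontrivial integer
multiple of a lattice vector. -/
def IsPrim {ι : Type} (r : ι → ℤ) : Prop :=
  ∀ (k : ℤ) (x : ι → ℤ), r = k • x → IsUnit k

/-- `s = div(r)`: the positive generator of the ideal `{(r,l) : l ∈ L} ⊆ ℤ`. -/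
def IsDivisorOf {ι : Type} [Fintype ι] (G : Matrix ι ι ℤ) (r : ι → ℤ) (s : ℤ) : Prop :=
  0 < s ∧ (∀ l : ι → ℤ, s ∣ bilin G r l) ∧ ∃ l : ι → ℤ, bilin G r l = s

/-- Two lattices, given as `ℤ`-modules with `ℤ`-valued bilinear forms, are isometric. -/
def LatIsometric {M N : Type} [AddCommGroup M] [Module ℤ M] [AddCommGroup N] [Module ℤ N]
    (BM : M → M → ℤ) (BN : N → N → ℤ) : Prop :=
  ∃ e : M ≃ₗ[ℤ] N, ∀ x y : M, BN (e x) (e y) = BM x y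

/-- The orthogonal complement `K_r = {x : (x,r) = 0}` of `r`, as a `ℤ`-submodule. -/
def orthC {ι : Type} [Fintype ι] (G : Matrix ι ι ℤ) (r : ι → ℤ) :
    Submodule ℤ (ι → ℤ) where
  carrier := {x | bilin G x r = 0}
  zero_mem' := by simp [bilin]
  add_mem' := by
    intro a b ha hb
    simp only [Set.mem_setOf_eq, bilin, Pi.add_apply, add_mul, Finset.sum_add_distrib] at *
    rw [ha, hb, add_zero]
  smul_mem' := by
    intro c x hx
    simp only [Set.mem_setOf_eq, bilin, Pi.smul_apply, smul_eq_mul, mul_assoc,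
      ← Finset.mul_sum] at *
    rw [hx, mul_zero]

theorem fac (a b d t : ℤ) (hd : d ≠ 0) (h : t * (t+1) = d * a * b) :
    ∃ a0 a1 b0 b1 d0 d1 : ℤ, a = a0*a1 ∧ b = b0*b1 ∧ d = d0*d1 ∧ t = a0*b0*d0 ∧ t + 1 = a1*b1*d1 := by
  obtain ⟨d0, d1, ⟨t', h0⟩, ⟨s', h1⟩, hd'⟩ := exists_dvd_and_dvd_of_dvd_mul (a := d) (b := t) (c := t+1) ⟨a*b, by rw [h]; ring⟩
  have hab : t' * s' = a * b := by
    apply mul_left_cancel₀ hd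
    calc d * (t' * s') = (d0*t') * (d1 * s') := by rw [hd']; ring
      _ = d * (a * b) := by rw [← h0, ← h1, h]; ring
  by_cases ha : a = 0
  · subst ha
    rcases mul_eq_zero.1 (hab.trans (zero_mul b)) with h2 | h2
    · subst h2
      have ht : t = 0 := by simpa using h0
      have hs : d1 * s' = 1 := by rw [← h1, ht]; rfl
      have hu : s' * s' = 1 := Int.isUnit_mul_self (IsUnit.of_mul_eq_one_right _ hs)
      exact ⟨0, 1, b*s', s', d0, d1, by ring, by linear_combination (-b) * hu, hd', by rw [ht]; ring, by rw [h1]; ring⟩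
    · subst h2
      have ht : t + 1 = 0 := by simpa using h1
      have hs : (-d0) * t' = 1 := by linear_combination h0 - ht
      have hu : t' * t' = 1 := Int.isUnit_mul_self (IsUnit.of_mul_eq_one_right _ hs)
      exact ⟨1, 0, t', b*t', d0, d1, by ring, by linear_combination (-b) * hu, hd', by rw [h0]; ring, by rw [ht]; ring⟩
  · obtain ⟨a0, a1, ⟨b0, h2⟩, ⟨b1, h3⟩, ha'⟩ := exists_dvd_and_dvd_of_dvd_mul (a := a) (b := t') (c := s') ⟨b, hab⟩
    refine ⟨a0, a1, b0, b1, d0, d1, ha', ?_, hd', by rw [h0, h2]; ring, by rw [h1, h3]; ring⟩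
    apply mul_left_cancel₀ ha
    rw [← hab, h2, h3, ha']; ring

abbrev Mdl (W : Type) := ℤ × ℤ × ℤ × ℤ × W

section
variable {W : Type} [AddCommGroup W]

def mB (B : W →ₗ[ℤ] W →ₗ[ℤ] ℤ) (p p' : Mdl W) : ℤ :=
  p.1 * p'.2.1 + p.2.1 * p'.1 + (p.2.2.1 * p'.2.2.2.1 + p.2.2.2.1 * p'.2.2.1) + B p.2.2.2.2 p'.2.2.2.2

def Good (B : W →ₗ[ℤ] W →ₗ[ℤ] ℤ) (d : ℤ) (v : Mdl W) : Prop :=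
  ∀ c : ℤ, c^2 = 1 + 2 * d * mB B v v → ∃ (f : Mdl W →ₗ[ℤ] Mdl W) (g : Mdl W →ₗ[ℤ] ℤ),
    (∀ p p', mB B (f p) (f p') - 2 * d * g p * g p' = mB B p p') ∧
    (∀ p, mB B (f p) v = c * g p) ∧
    (∀ p, f p = 0 → g p = 0 → p = 0) ∧
    (∀ p z, mB B p v = c * z → ∃ s, f s = p ∧ g s = z)

theorem good_of (B : W →ₗ[ℤ] W →ₗ[ℤ] ℤ) (d : ℤ) (v : Mdl W) (e : Mdl W ≃ₗ[ℤ] Mdl W)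
    (he : ∀ p p', mB B (e p) (e p') = mB B p p') (h : Good B d (e v)) : Good B d v := by
  intro c hc
  obtain ⟨f, g, h1, h2, h3, h4⟩ := h c (by rw [he, hc])
  refine ⟨e.symm.toLinearMap ∘ₗ f, g, ?_, ?_, ?_, ?_⟩
  · intro p p'
    rw [← h1 p p', ← he]; simp
  · intro p
    rw [← h2 p, ← he]; simp
  · intro p hp hg
    exact h3 p (by simpa using hp) hg
  · intro p z hz
    obtain ⟨s, hs, hg⟩ := h4 (e p) z (by rw [he, hz])
    exact ⟨s, by simp [hs], hg⟩

def swapE : Mdl W ≃ₗ[ℤ] Mdl W where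
  toFun p := (p.2.2.1, p.2.2.2.1, p.1, p.2.1, p.2.2.2.2)
  invFun p := (p.2.2.1, p.2.2.2.1, p.1, p.2.1, p.2.2.2.2)
  map_add' p q := rfl
  map_smul' k p := rfl
  left_inv p := rfl
  right_inv p := rfl

def flipE : Mdl W ≃ₗ[ℤ] Mdl W where
  toFun p := (p.2.1, p.1, p.2.2.1, p.2.2.2.1, p.2.2.2.2)
  invFun p := (p.2.1, p.1, p.2.2.1, p.2.2.2.1, p.2.2.2.2)
  map_add' p q := rfl
  map_smul' k p := rfl
  left_inv p := rfl
  right_inv p := rfl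

def rotE (k : ℤ) : Mdl W ≃ₗ[ℤ] Mdl W where
  toFun p := (p.1 - k * p.2.2.2.1, p.2.1, p.2.2.1 + k * p.2.1, p.2.2.2.1, p.2.2.2.2)
  invFun p := (p.1 + k * p.2.2.2.1, p.2.1, p.2.2.1 - k * p.2.1, p.2.2.2.1, p.2.2.2.2)
  map_add' p q := by
    ext <;> simp <;> ring
  map_smul' j p := by
    ext <;> simp <;> ring
  left_inv p := by ext <;> simp
  right_inv p := by ext <;> simp

def eicE (B : W →ₗ[ℤ] W →ₗ[ℤ] ℤ) (u : W) (q : ℤ) (hq : B u u = 2 * q) : Mdl W ≃ₗ[ℤ] Mdl W where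
  toFun p := (p.1 - B u p.2.2.2.2 - q * p.2.1, p.2.1, p.2.2.1, p.2.2.2.1, p.2.2.2.2 + p.2.1 • u)
  invFun p := (p.1 + B u p.2.2.2.2 - q * p.2.1, p.2.1, p.2.2.1, p.2.2.2.1, p.2.2.2.2 - p.2.1 • u)
  map_add' p r := by
    refine Prod.ext ?_ (Prod.ext ?_ (Prod.ext ?_ (Prod.ext ?_ ?_)))
    · simp; ring
    · simp
    · simp
    · simp
    · simp [add_smul]; abel
  map_smul' j p := by
    refine Prod.ext ?_ (Prod.ext ?_ (Prod.ext ?_ (Prod.ext ?_ ?_)))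
    · simp; ring
    · simp
    · simp
    · simp
    · simp [mul_smul]
  left_inv p := by
    refine Prod.ext ?_ (Prod.ext ?_ (Prod.ext ?_ (Prod.ext ?_ ?_)))
    · simp [hq]; ring
    · simp
    · simp
    · simp
    · simp
  right_inv p := by
    refine Prod.ext ?_ (Prod.ext ?_ (Prod.ext ?_ (Prod.ext ?_ ?_)))
    · simp [hq]; ring
    · simp
    · simp
    · simp
    · simp

theorem good_swap (B : W →ₗ[ℤ] W →ₗ[ℤ] ℤ) (d x y x' y' : ℤ) (w : W)
    (h : Good B d (x', y', x, y, w)) : Good B d (x, y, x', y', w) :=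
  good_of B d _ swapE (by intro p p'; simp [swapE, mB]; ring) h

theorem good_flip (B : W →ₗ[ℤ] W →ₗ[ℤ] ℤ) (d x y x' y' : ℤ) (w : W)
    (h : Good B d (y, x, x', y', w)) : Good B d (x, y, x', y', w) :=
  good_of B d _ flipE (by intro p p'; simp [flipE, mB]; ring) h

theorem good_flip2 (B : W →ₗ[ℤ] W →ₗ[ℤ] ℤ) (d x y x' y' : ℤ) (w : W)
    (h : Good B d (x, y, y', x', w)) : Good B d (x, y, x', y', w) :=
  good_swap _ _ _ _ _ _ _ (good_flip _ _ _ _ _ _ _ (good_swap _ _ _ _ _ _ _ h))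

theorem good_rot (B : W →ₗ[ℤ] W →ₗ[ℤ] ℤ) (d x y x' y' : ℤ) (w : W) (k : ℤ)
    (h : Good B d (x - k * y', y, x' + k * y, y', w)) : Good B d (x, y, x', y', w) :=
  good_of B d _ (rotE k) (by intro p p'; simp [rotE, mB]; ring) h

theorem good_eic (B : W →ₗ[ℤ] W →ₗ[ℤ] ℤ) (hs : ∀ u w, B u w = B w u)
    (d x y x' y' : ℤ) (w : W) (u : W) (q : ℤ) (hq : B u u = 2 * q)
    (h : Good B d (x - B u w - q * y, y, x', y', w + y • u)) : Good B d (x, y, x', y', w) :=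
  good_of B d _ (eicE B u q hq) (by
    intro p p'
    simp [eicE, mB, hq, hs _ u]; ring) h

theorem good_base (B : W →ₗ[ℤ] W →ₗ[ℤ] ℤ) (d : ℤ) (hd : d ≠ 0) (a b : ℤ) :
    Good B d (a, b, 0, 0, 0) := by
  intro c hc
  have hc' : c ^ 2 = 1 + 4 * d * a * b := by rw [hc]; simp [mB]; ring
  obtain ⟨t, ht⟩ : Odd c := by
    have : Odd (c^2) := ⟨2 * d * a * b, by rw [hc']; ring⟩
    exact (Int.odd_pow' (two_ne_zero)).1 this
  subst ht
  obtain ⟨a0, a1, b0, b1, d0, d1, rfl, rfl, rfl, h0, h1⟩ := fac a b d t hd (by linarith)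
  subst h0
  have hx : a1 * b1 * d1 - a0 * b0 * d0 = 1 := by linarith
  refine ⟨{ toFun := fun p => (p.1 * (a1^2*d1) + p.2.1 * (a0^2*d0), p.1 * (b0^2*d0) + p.2.1*(b1^2*d1), p.2.2)
            map_add' := ?_, map_smul' := ?_ },
          { toFun := fun p => p.1 * (a1*b0) + p.2.1 * (a0*b1)
            map_add' := ?_, map_smul' := ?_ }, ?_, ?_, ?_, ?_⟩
  · intro p q; ext <;> simp <;> ring
  · intro k p; ext <;> simp <;> ring
  · intro p q; simp; ring
  · intro k p; simp; ring
  · rintro ⟨x, y, p⟩ ⟨x', y', p'⟩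
    simp [mB]
    linear_combination (x*y'+y*x') * (a1 * b1 * d1 - a0 * b0 * d0 + 1) * hx
  · rintro ⟨x, y, p⟩
    simp [mB]
    linear_combination (x*a1*b0+y*a0*b1)*hx
  · rintro ⟨x, y, p⟩ h1 h2
    simp [Prod.ext_iff] at h1 h2
    obtain ⟨h3, h4, h5⟩ := h1
    have hX : x = 0 := by
      linear_combination (b1^2*d1)*h3 + (a0^2*d0)*h4 - 2*d0*d1*(a0*b1)*h2 - x * (a1 * b1 * d1 - a0 * b0 * d0 + 1) * hx
    have hY : y = 0 := by
      linear_combination (b0^2*d0)*h3 + (a1^2*d1)*h4 - 2*d0*d1*(a1*b0)*h2 - y * (a1 * b1 * d1 - a0 * b0 * d0 + 1) * hx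
    simp [Prod.ext_iff, hX, hY, h5]
  · rintro ⟨x, y, p⟩ z h
    simp [mB] at h
    refine ⟨(x*(b1^2*d1) + y*(a0^2*d0) - 2*d0*d1*z*(a0*b1), x*(b0^2*d0) + y*(a1^2*d1) - 2*d0*d1*z*(a1*b0), p), ?_, ?_⟩
    · simp only [LinearMap.coe_mk, AddHom.coe_mk]
      refine Prod.ext ?_ (Prod.ext ?_ rfl)
      · simp only
        linear_combination (2*d0*d1*a0*a1)*h + (x * (a1 * b1 * d1 - a0 * b0 * d0 + 1) - 2*d0*d1*a0*a1*z) * hx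
      · simp only
        linear_combination (2*d0*d1*b0*b1)*h + (y * (a1 * b1 * d1 - a0 * b0 * d0 + 1)- 2*d0*d1*b0*b1*z) * hx
    · simp only [LinearMap.coe_mk, AddHom.coe_mk]
      linear_combination (a1*b1*d1+a0*b0*d0)*h + (z * (a1 * b1 * d1 - a0 * b0 * d0 + 1) - z*(a1*b1*d1+a0*b0*d0)) * hx

theorem good_all (B : W →ₗ[ℤ] W →ₗ[ℤ] ℤ) (hs : ∀ u w, B u w = B w u)
    (he : ∀ u, ∃ q, B u u = 2 * q) (hu : ∀ (k : ℤ) w, (∀ u, k ∣ B u w) → ∃ w', w = k • w')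
    (d : ℤ) (hd : d ≠ 0) : ∀ v : Mdl W, Good B d v := by
  have key : ∀ n : ℕ, ∀ x y x' y' w, y ≠ 0 → y.natAbs = n → Good B d (x, y, x', y', w) := by
    intro n
    induction n using Nat.strong_induction_on with
    | _ n ih =>
    have A : ∀ x y x' y' w, y ≠ 0 → y.natAbs = n → ¬ (y ∣ x') → Good B d (x, y, x', y', w) := by
      intro x y x' y' w hy hn hx
      apply good_rot B d _ _ _ _ _ (-(x' / y))
      have : x' + -(x'/y) * y = x' % y := by rw [Int.emod_def]; ring
      rw [this]
      apply good_swap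
      apply good_flip
      refine ih _ ?_ _ _ _ _ _ (fun h => hx (Int.dvd_of_emod_eq_zero h)) rfl
      have h1 := Int.emod_nonneg x' hy
      have h2 := Int.emod_lt_abs x' hy
      rw [Int.abs_eq_natAbs] at h2
      omega
    have A2 : ∀ x y y' w, y ≠ 0 → y.natAbs = n → Good B d (x, y, 0, y', w) := by
      intro x y y' w hy hn
      by_cases hx : y ∣ y'
      · obtain ⟨k, rfl⟩ := hx
        apply good_flip2
        apply good_rot B d _ _ _ _ _ (-k)
        have : y * k + -k * y = 0 := by ring
        rw [this]
        by_cases hw : ∀ u, y ∣ B u w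
        · obtain ⟨w', rfl⟩ := hu y w hw
          obtain ⟨q, hq⟩ := he (-w')
          apply good_eic B hs _ _ _ _ _ _ (-w') q hq
          simp only [smul_neg, add_neg_cancel]
          apply good_flip
          apply good_flip
          exact good_base B d hd _ _
        · push Not at hw
          obtain ⟨u, hw⟩ := hw
          obtain ⟨q, hq⟩ := he u
          apply good_swap
          apply good_eic B hs _ _ _ _ _ _ u q hq
          apply good_swap
          apply A _ _ _ _ _ hy hn
          simpa using hw
      · apply good_flip2
        exact A _ _ _ _ _ hy hn hx
    intro x y x' y' w hy hn
    by_cases hx : y ∣ x'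
    · obtain ⟨k, rfl⟩ := hx
      apply good_rot B d _ _ _ _ _ (-k)
      have : y * k + -k * y = 0 := by ring
      rw [this]
      exact A2 _ _ _ _ hy hn
    · exact A _ _ _ _ _ hy hn hx
  rintro ⟨x, y, x', y', w⟩
  by_cases h1 : y = 0
  swap
  · exact key _ _ _ _ _ _ h1 rfl
  by_cases h2 : x = 0
  swap
  · exact good_flip _ _ _ _ _ _ _ (key _ _ _ _ _ _ h2 rfl)
  by_cases h3 : y' = 0
  swap
  · exact good_swap _ _ _ _ _ _ _ (key _ _ _ _ _ _ h3 rfl)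
  by_cases h4 : x' = 0
  swap
  · exact good_flip2 _ _ _ _ _ _ _ (good_swap _ _ _ _ _ _ _ (key _ _ _ _ _ _ h4 rfl))
  subst h1 h2 h3 h4
  by_cases hw : ∀ u, (0:ℤ) ∣ B u w
  · obtain ⟨w', rfl⟩ := hu 0 w hw
    rw [zero_smul]
    exact good_base B d hd _ _
  · push Not at hw
    obtain ⟨u, hw⟩ := hw
    obtain ⟨q, hq⟩ := he u
    apply good_eic B hs _ _ _ _ _ _ u q hq
    apply good_flip
    refine key _ _ _ _ _ _ ?_ rfl
    simpa using hw

end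

theorem bilin_copies (m : ℕ) (u w : Fin m × Fin 8 → ℤ) :
    bilin (gramE8copies m) u w =
      ∑ i, bilin gramE8neg (fun j => u (i, j)) (fun j => w (i, j)) := by
  unfold bilin gramE8copies
  rw [Fintype.sum_prod_type]
  refine Finset.sum_congr rfl fun i _ => Finset.sum_congr rfl fun j _ => ?_
  rw [Fintype.sum_prod_type, Finset.sum_eq_single i]
  · simp
  · intro k _ hk
    simp [hk.symm]
  · simp

theorem bilin_E8_even (u : Fin 8 → ℤ) : (2:ℤ) ∣ bilin gramE8neg u u := by
  simp [bilin, gramE8neg, CartanMatrix.E₈, Fin.sum_univ_eight]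
  ring_nf
  omega

theorem gramE8neg_symm (i j) : gramE8neg i j = gramE8neg j i := by
  unfold gramE8neg
  rw [Matrix.neg_apply, Matrix.neg_apply, CartanMatrix.E₈_isSymm.apply]

theorem bilin_symm {ι : Type} [Fintype ι] (G : Matrix ι ι ℤ) (h : ∀ i j, G i j = G j i) (x y : ι → ℤ) :
    bilin G x y = bilin G y x := by
  unfold bilin
  rw [Finset.sum_comm]
  refine Finset.sum_congr rfl fun i _ => Finset.sum_congr rfl fun j _ => ?_
  rw [h i j]; ring

theorem E8_dual (j : Fin 8) : ∃ u : Fin 8 → ℤ, ∀ w, bilin gramE8neg u w = w j := by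
  have hdet : IsUnit gramE8neg.det := by
    unfold gramE8neg
    rw [Matrix.det_neg, CartanMatrix.E₈_det]; simp
  have h := Matrix.nonsing_inv_mul gramE8neg hdet
  refine ⟨fun i => gramE8neg⁻¹ j i, fun w => ?_⟩
  have h2 : ∀ k, ∑ i, gramE8neg⁻¹ j i * gramE8neg i k = if j = k then 1 else 0 := by
    intro k
    have := congrFun (congrFun h j) k
    rwa [Matrix.mul_apply, Matrix.one_apply] at this
  unfold bilin
  rw [Finset.sum_comm]
  simp [← Finset.sum_mul, h2]

theorem copies_even (m : ℕ) (u : Fin m × Fin 8 → ℤ) : ∃ q, bilin (gramE8copies m) u u = 2 * q := by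
  rw [bilin_copies]
  exact Finset.dvd_sum fun i _ => bilin_E8_even _

theorem copies_symm (m : ℕ) (u w : Fin m × Fin 8 → ℤ) :
    bilin (gramE8copies m) u w = bilin (gramE8copies m) w u := by
  rw [bilin_copies, bilin_copies]
  exact Finset.sum_congr rfl fun i _ => bilin_symm _ gramE8neg_symm _ _

theorem copies_unimod (m : ℕ) (k : ℤ) (w : Fin m × Fin 8 → ℤ)
    (h : ∀ u, k ∣ bilin (gramE8copies m) u w) : ∃ w', w = k • w' := by
  have : ∀ p, k ∣ w p := by
    rintro ⟨i, j⟩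
    obtain ⟨u, hu⟩ := E8_dual j
    have := h (fun p => if p.1 = i then u p.2 else 0)
    rw [bilin_copies, Finset.sum_eq_single i] at this
    · simpa [hu] using this
    · intro k _ hk
      simp [bilin, hk]
    · simp
  choose f hf using this
  exact ⟨f, funext fun p => by simp [hf p]⟩

noncomputable def BE (m : ℕ) : (Fin m × Fin 8 → ℤ) →ₗ[ℤ] (Fin m × Fin 8 → ℤ) →ₗ[ℤ] ℤ :=
  Matrix.toBilin' (gramE8copies m)

theorem BE_apply (m : ℕ) (u w) : BE m u w = bilin (gramE8copies m) u w := by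
  unfold BE bilin
  rw [Matrix.toBilin'_apply]

def phi (m : ℕ) : (IdxII m → ℤ) ≃ₗ[ℤ] Mdl (Fin m × Fin 8 → ℤ) where
  toFun x := (x (.inl (.inl 0)), x (.inl (.inl 1)), x (.inl (.inr 0)), x (.inl (.inr 1)), fun p => x (.inr p))
  invFun p := Sum.elim (Sum.elim ![p.1, p.2.1] ![p.2.2.1, p.2.2.2.1]) p.2.2.2.2
  map_add' _ _ := rfl
  map_smul' _ _ := rfl
  left_inv x := by
    ext i
    rcases i with (i | i) | i
    · fin_cases i <;> rfl
    · fin_cases i <;> rfl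
    · rfl
  right_inv _ := rfl

theorem bilin_II (m : ℕ) (x y : IdxII m → ℤ) :
    bilin (gramII m) x y = mB (BE m) (phi m x) (phi m y) := by
  unfold mB
  rw [BE_apply]
  change _ = x (.inl (.inl 0)) * y (.inl (.inl 1)) + x (.inl (.inl 1)) * y (.inl (.inl 0))
    + (x (.inl (.inr 0)) * y (.inl (.inr 1)) + x (.inl (.inr 1)) * y (.inl (.inr 0)))
    + bilin (gramE8copies m) (fun p => x (.inr p)) (fun p => y (.inr p))
  simp [bilin, gramII, gramU, Fintype.sum_sum_type]

theorem bilin_L (m d : ℕ) (x y : IdxL m → ℤ) :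
    bilin (gramL m d) x y = mB (BE m) (phi m fun i => x (.inl i)) (phi m fun i => y (.inl i))
      - 2 * d * x (.inr 0) * y (.inr 0) := by
  rw [← bilin_II]
  unfold bilin
  simp only [gramL, Fintype.sum_sum_type, Matrix.fromBlocks_apply₁₁, Matrix.fromBlocks_apply₁₂,
    Matrix.fromBlocks_apply₂₁, Matrix.fromBlocks_apply₂₂]
  simp [-Fintype.sum_sum_type]
  ring

theorem mB_symm {W : Type} [AddCommGroup W] (B : W →ₗ[ℤ] W →ₗ[ℤ] ℤ) (hs : ∀ u w, B u w = B w u) (p q) :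
    mB B p q = mB B q p := by
  unfold mB; rw [hs]; ring

theorem mB_smul {W : Type} [AddCommGroup W] (B : W →ₗ[ℤ] W →ₗ[ℤ] ℤ) (k : ℤ) (p q) :
    mB B p (k • q) = k * mB B p q := by
  unfold mB; simp; ring

theorem mB_unimod {W : Type} [AddCommGroup W] (B : W →ₗ[ℤ] W →ₗ[ℤ] ℤ)
    (hu : ∀ (k : ℤ) w, (∀ u, k ∣ B u w) → ∃ w', w = k • w') (k : ℤ) (p : Mdl W)
    (h : ∀ q, k ∣ mB B q p) : ∃ p', p = k • p' := by
  obtain ⟨x, y, x', y', w⟩ := p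
  obtain ⟨a, ha⟩ := h (0, 1, 0, 0, 0)
  obtain ⟨b, hb⟩ := h (1, 0, 0, 0, 0)
  obtain ⟨a', ha'⟩ := h (0, 0, 0, 1, 0)
  obtain ⟨b', hb'⟩ := h (0, 0, 1, 0, 0)
  obtain ⟨w', hw⟩ := hu k w (fun u => by simpa [mB] using h (0, 0, 0, 0, u))
  simp [mB] at ha hb ha' hb'
  refine ⟨(a, b, a', b', w'), ?_⟩
  rw [ha', hb', hw]
  simp [ha, hb]

/-- Let `r` be a primitive vector in `L = L_{2d}^{(m)}` with
`(r,r) = −2d` and `div(r) = 2d`.  Then the orthogonal complement `K_r`, with the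
restricted form, is isometric to the even unimodular lattice `II_{2,8m+2}`. -/
theorem orthogonal_complement_divisor_two_d
    (m d : ℕ) (hd : 1 ≤ d) (r : IdxL m → ℤ) (hprim : IsPrim r)
    (hr : bilin (gramL m d) r r = -(2 * (d : ℤ)))
    (hdiv : IsDivisorOf (gramL m d) r (2 * (d : ℤ))) :
    LatIsometric
      (fun x y : ↥(orthC (gramL m d) r) =>
        bilin (gramL m d) (x : IdxL m → ℤ) (y : IdxL m → ℤ))
      (bilin (gramII m)) := by
  have hs : ∀ u w, BE m u w = BE m w u := fun u w => by
    rw [BE_apply, BE_apply, copies_symm]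
  have hu : ∀ (k : ℤ) w, (∀ u, k ∣ BE m u w) → ∃ w', w = k • w' := fun k w h =>
    copies_unimod m k w (fun u => by rw [← BE_apply]; exact h u)
  have hd0 : (d : ℤ) ≠ 0 := by exact_mod_cast (by omega : d ≠ 0)
  have h2d : (2 * (d : ℤ)) ≠ 0 := by positivity
  obtain ⟨v, hv⟩ : ∃ v, phi m (fun i => r (.inl i)) = (2 * (d : ℤ)) • v := by
    apply mB_unimod _ hu
    intro q
    have h := hdiv.2.1 (Sum.elim ((phi m).symm q) 0)
    rw [bilin_L] at h
    have h' : (fun i => Sum.elim ((phi m).symm q) (0 : Fin 1 → ℤ) (Sum.inl i)) = (phi m).symm q := rfl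
    rw [h', LinearEquiv.apply_symm_apply, mB_symm _ hs] at h
    simpa using h
  set c := r (.inr 0) with hcdef
  have hc : c ^ 2 = 1 + 2 * (d : ℤ) * mB (BE m) v v := by
    rw [bilin_L, hv, mB_smul, mB_symm _ hs, mB_smul, ← hcdef] at hr
    apply mul_left_cancel₀ h2d
    linarith
  obtain ⟨f, g, h1, h2, h3, h4⟩ := good_all (BE m) hs
    (fun u => by rw [BE_apply]; exact copies_even m u) hu d hd0 v c hc
  have hmem : ∀ x : IdxL m → ℤ, x ∈ orthC (gramL m d) r ↔
      mB (BE m) (phi m fun i => x (.inl i)) v = c * x (.inr 0) := by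
    intro x
    change bilin (gramL m d) x r = 0 ↔ _
    rw [bilin_L, hv, mB_smul, ← hcdef]
    constructor
    · intro h
      apply mul_left_cancel₀ h2d
      linarith
    · intro h
      rw [h]; ring
  let F : (IdxII m → ℤ) →ₗ[ℤ] (IdxL m → ℤ) :=
    { toFun := fun s => Sum.elim ((phi m).symm (f (phi m s))) (fun _ => g (phi m s))
      map_add' := by
        intro s t
        ext i
        rcases i with i | i <;> simp
      map_smul' := by
        intro k s
        rw [map_smul, map_smul, map_smul, map_smul]
        ext i
        rcases i with i | i <;> rfl }
  have F1 : ∀ s, (phi m fun i => F s (.inl i)) = f (phi m s) := fun s =>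
    (phi m).apply_symm_apply _
  have F2 : ∀ s, F s (.inr 0) = g (phi m s) := fun s => rfl
  let F' : (IdxII m → ℤ) →ₗ[ℤ] orthC (gramL m d) r :=
    F.codRestrict _ (fun s => by rw [hmem, F1, F2, h2])
  have hbij : Function.Bijective F' := by
    constructor
    · rw [injective_iff_map_eq_zero]
      intro s hs0
      have h0 : F s = 0 := congrArg Subtype.val hs0
      apply (phi m).map_eq_zero_iff.1
      apply h3
      · rw [← F1, h0]; exact (phi m).map_zero
      · rw [← F2, h0]; rfl
    · rintro ⟨x, hx⟩
      obtain ⟨s, hs1, hs2⟩ := h4 _ _ ((hmem x).1 hx)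
      refine ⟨(phi m).symm s, Subtype.ext ?_⟩
      change F _ = x
      have h5 := F1 ((phi m).symm s)
      rw [LinearEquiv.apply_symm_apply, hs1] at h5
      have h6 := (phi m).injective h5
      ext i
      rcases i with i | i
      · exact congrFun h6 i
      · obtain rfl : i = 0 := Subsingleton.elim _ _
        rw [F2, LinearEquiv.apply_symm_apply, hs2]
  refine ⟨(LinearEquiv.ofBijective F' hbij).symm, ?_⟩
  intro x y
  obtain ⟨s, rfl⟩ := hbij.2 x
  obtain ⟨t, rfl⟩ := hbij.2 y
  have h7 : ∀ s, (LinearEquiv.ofBijective F' hbij).symm (F' s) = s := fun s =>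
    (LinearEquiv.ofBijective F' hbij).symm_apply_apply s
  rw [h7, h7]
  change _ = bilin (gramL m d) (F s) (F t)
  rw [bilin_L, F1, F1, F2, F2, h1, bilin_II]
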